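/- Let k be an algebraically closed field and D a k-linear triangulated category with finite-dimensional Hom spaces. If H_0, H_1, …, H_r (r ≥ 1) are hearts of bounded t-structures on D such that H_0 is finite and each H_{t+1} = (H_t)^♯_{S_t} is the simple forward tilt of H_t at some rigid simple S_t of H_t, then H_0 < H_r; in particular H_r ≠ H_0, so the exchange graph of D (vertices the hearts, edges the simple forward tilts) contains no oriented cycle. -/

import Mathlib

/-!
The aisle of a bounded t-structure is generated by its heart under extensions and nonnegative
shifts: truncation filters every object by shifts of objects of the heart. Hence the order on
aisles can be tested on hearts, and a heart determines its aisle. A forward tilt of a heart `H`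
consists of extensions of objects of `H` by objects of `H[1]`, so aisles can only shrink along a
chain of forward tilts. If the first and the last aisle agree, then all of them do, and no tilt in
the chain changes the heart; but a nonzero object of `H` outside the torsion part, such as the
simple object at which one tilts, does not lie in the tilted heart.
-/

open CategoryTheory Category Limits Pretriangulated ZeroObject

universe v u

namespace Paper

variable (C : Type u) [Category.{v} C] [HasZeroObject C] [HasShift C ℤ]
  [Preadditive C] [∀ n : ℤ, (shiftFunctor C n).Additive] [Pretriangulated C]

/-- The right perpendicular of a set of objects: objects receiving no nonzero
morphism from the set. -/
def perp (P : Set C) : Set C := {G | ∀ F ∈ P, ∀ f : F ⟶ G, f = 0}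

/-- A bounded t-structure on a (pre)triangulated category, given by its aisle `P`. -/
structure TStr where
  P : Set C
  /-- `P` is closed under direct summands (hence under isomorphism). -/
  summand : ∀ (X Y : C) (i : Y ⟶ X) (r : X ⟶ Y), i ≫ r = 𝟙 Y → X ∈ P → Y ∈ P
  /-- `P[1] ⊆ P`. -/
  shift_mem : ∀ X ∈ P, X⟦(1 : ℤ)⟧ ∈ P
  /-- Every object fits in a triangle `F → E → G → F[1]` with `F ∈ P` and `G ∈ P^⊥`. -/
  exists_triangle : ∀ E : C, ∃ (F G : C) (f : F ⟶ E) (g : E ⟶ G) (h : G ⟶ F⟦(1 : ℤ)⟧),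
    F ∈ P ∧ G ∈ perp C P ∧ Triangle.mk f g h ∈ distTriang C
  /-- `M[k] ∈ P` for `k ≫ 0`. -/
  bounded_above : ∀ M : C, ∃ a : ℤ, ∀ j : ℤ, a ≤ j → M⟦j⟧ ∈ P
  /-- `M[k] ∈ P^⊥` for `k ≪ 0`. -/
  bounded_below : ∀ M : C, ∃ b : ℤ, ∀ j : ℤ, j ≤ b → M⟦j⟧ ∈ perp C P

/-- The heart `H = P^⊥[1] ∩ P` of a bounded t-structure. -/
def heart (T : TStr C) : Set C := {X | X ∈ T.P ∧ X⟦(-1 : ℤ)⟧ ∈ perp C T.P}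

/-- The shift `S[m]` of a set of objects. -/
def shiftSet (S : Set C) (m : ℤ) : Set C := {X | X⟦(-m : ℤ)⟧ ∈ S}

/-- An object `P` is a projective of a heart if `Hom(P, M[k]) = 0` for all `k ≠ 0`
and all `M` in the heart. -/
def IsProjOf (T : TStr C) (P : C) : Prop :=
  ∀ (k : ℤ), k ≠ 0 → ∀ M ∈ heart C T, ∀ f : P ⟶ M⟦k⟧, f = 0

/-- A filtration of an object `M` by triangles with factors in the heart, shifted by a
strictly decreasing sequence of degrees: the canonical filtration associated to a bounded
t-structure. -/
structure HeartFiltration (T : TStr C) (M : C) where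
  n : ℕ
  obj : ℕ → C
  deg : ℕ → ℤ
  factor : ℕ → C
  zero : IsZero (obj 0)
  top : obj n ≅ M
  mem : ∀ i, 1 ≤ i → i ≤ n → factor i ∈ heart C T
  strict : ∀ i j, 1 ≤ i → i < j → j ≤ n → deg j < deg i
  tri : ∀ i, 1 ≤ i → i ≤ n →
    ∃ (f : obj (i - 1) ⟶ obj i) (g : obj i ⟶ (factor i)⟦deg i⟧)
      (h : (factor i)⟦deg i⟧ ⟶ (obj (i - 1))⟦(1 : ℤ)⟧),
      Triangle.mk f g h ∈ distTriang C

variable {C}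

open Classical in
/-- The homology `H^k(M)` of `M` with respect to the heart, read off from a
filtration: the factor in degree `k` if there is one, and `0` otherwise. -/
noncomputable def HeartFiltration.homologyAt {T : TStr C} {M : C}
    (F : HeartFiltration C T M) (k : ℤ) : C :=
  if h : ∃ i, 1 ≤ i ∧ i ≤ F.n ∧ F.deg i = k then F.factor h.choose else 0

variable (C)

/-- A torsion pair `⟨F, T⟩` in the heart of a bounded t-structure: `Hom(T, F) = 0` and
every object of the heart is an extension (triangle) of an `F`-object by a `T`-object. -/
structure TorsionPairIn (T : TStr C) where
  free : Set C
  tor : Set C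
  free_sub : free ⊆ heart C T
  tor_sub : tor ⊆ heart C T
  hom_zero : ∀ X ∈ tor, ∀ Y ∈ free, ∀ f : X ⟶ Y, f = 0
  exists_ses : ∀ E ∈ heart C T, ∃ (A B : C) (f : A ⟶ E) (g : E ⟶ B) (h : B ⟶ A⟦(1 : ℤ)⟧),
    A ∈ tor ∧ B ∈ free ∧ Triangle.mk f g h ∈ distTriang C

/-- The forward tilt `H^♯` of the heart at a torsion pair `⟨free, tor⟩`:
objects `E` with `H^1(E) ∈ F`, `H^0(E) ∈ T` and `H^i(E) = 0` otherwise. -/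
def tiltSharpSet (T : TStr C) (free tor : Set C) : Set C :=
  {E | ∀ (F : HeartFiltration C T E) (i : ℕ), 1 ≤ i → i ≤ F.n →
    IsZero (F.factor i) ∨ (F.deg i = 1 ∧ F.factor i ∈ free) ∨
      (F.deg i = 0 ∧ F.factor i ∈ tor)}

/-- The backward tilt `H^♭` of the heart at a torsion pair `⟨free, tor⟩`:
objects `E` with `H^0(E) ∈ F`, `H^{-1}(E) ∈ T` and `H^i(E) = 0` otherwise. -/
def tiltFlatSet (T : TStr C) (free tor : Set C) : Set C :=
  {E | ∀ (F : HeartFiltration C T E) (i : ℕ), 1 ≤ i → i ≤ F.n →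
    IsZero (F.factor i) ∨ (F.deg i = 0 ∧ F.factor i ∈ free) ∨
      (F.deg i = -1 ∧ F.factor i ∈ tor)}

/-- Simple objects of a heart (or of any full subcategory closed under the abelian
structure): nonzero objects which are not the middle term of a nontrivial short exact
sequence (triangle) in the heart. -/
def IsSimpleIn (H : Set C) (X : C) : Prop :=
  X ∈ H ∧ ¬ IsZero X ∧ ∀ (A B : C) (f : A ⟶ X) (g : X ⟶ B) (h : B ⟶ A⟦(1 : ℤ)⟧),
    A ∈ H → B ∈ H → Triangle.mk f g h ∈ (distTriang C) → IsZero A ∨ IsZero B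

/-- A heart is finite if it has finitely many simples up to isomorphism and every object
is a finite iterated extension of simple objects. -/
def FiniteHeart (T : TStr C) : Prop :=
  (∃ (n : ℕ) (S : Fin n → C), (∀ i, IsSimpleIn C (heart C T) (S i)) ∧
    ∀ X, IsSimpleIn C (heart C T) X → ∃ i, Nonempty (X ≅ S i)) ∧
  ∀ M ∈ heart C T, ∃ (m : ℕ) (obj : ℕ → C), IsZero (obj 0) ∧ Nonempty (obj m ≅ M) ∧
    ∀ i < m, ∃ (s : C) (f : obj i ⟶ obj (i + 1)) (g : obj (i + 1) ⟶ s)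
      (h : s ⟶ (obj i)⟦(1 : ℤ)⟧),
      IsSimpleIn C (heart C T) s ∧ Triangle.mk f g h ∈ distTriang C

section Biproducts

variable [HasFiniteBiproducts C]

/-- Finite direct sums of copies of an object `S`. -/
def addObj (S : C) : Set C := {M | ∃ n : ℕ, Nonempty (M ≅ ⨁ (fun _ : Fin n => S))}

/-- The simple forward tilt `H^♯_S` of the heart at a rigid simple `S`: the forward tilt
at the torsion pair whose free part consists of finite direct sums of copies of `S`. -/
def simpleSharpSet (T : TStr C) (S : C) : Set C :=
  tiltSharpSet C T (addObj C S) {M | M ∈ heart C T ∧ ∀ f : M ⟶ S, f = 0}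

/-- The simple backward tilt `H^♭_S` of the heart at a rigid simple `S`: the backward
tilt at the torsion pair whose torsion part consists of finite direct sums of copies
of `S`. -/
def simpleFlatSet (T : TStr C) (S : C) : Set C :=
  tiltFlatSet C T {M | M ∈ heart C T ∧ ∀ f : S ⟶ M, f = 0} (addObj C S)

end Biproducts

section Tilting

open Triangulated

variable {C}

lemma exists_distTriang_of_iso {T : Triangle C} (hT : T ∈ distTriang C) {X Y Z : C}
    (a : T.obj₁ ≅ X) (b : T.obj₂ ≅ Y) (c : T.obj₃ ≅ Z) :
    ∃ (f : X ⟶ Y) (g : Y ⟶ Z) (h : Z ⟶ X⟦(1 : ℤ)⟧), Triangle.mk f g h ∈ distTriang C :=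
  ⟨a.inv ≫ T.mor₁ ≫ b.hom, b.inv ≫ T.mor₂ ≫ c.hom, c.inv ≫ T.mor₃ ≫ a.hom⟦(1 : ℤ)⟧',
    isomorphic_distinguished _ hT _ (Triangle.isoMk T _ a b c (a.hom_inv_id_assoc _).symm
      (b.hom_inv_id_assoc _).symm (c.hom_inv_id_assoc _).symm).symm⟩

instance isTriangulatedClosed₂_le (t : TStructure C) (n : ℤ) :
    (t.le n).IsTriangulatedClosed₂ :=
  .mk' fun T hT h₁ h₃ => (t.isLE₂ T hT n ⟨h₁⟩ ⟨h₃⟩).le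

instance containsZero_le (t : TStructure C) (n : ℤ) : (t.le n).ContainsZero :=
  ⟨0, isZero_zero C, t.le_of_isLE 0 n⟩

namespace TStr

lemma mem_P_of_iso (T : TStr C) {X Y : C} (e : X ≅ Y) (hX : X ∈ T.P) : Y ∈ T.P :=
  T.summand X Y e.inv e.hom e.inv_hom_id hX

lemma mem_perp_of_iso (T : TStr C) {X Y : C} (e : X ≅ Y) (hX : X ∈ perp C T.P) :
    Y ∈ perp C T.P := fun F hF f => by
  rw [← cancel_mono e.inv, hX F hF (f ≫ e.inv), zero_comp]

lemma shift_neg_one_mem_perp (T : TStr C) {X : C} (hX : X ∈ perp C T.P) :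
    X⟦(-1 : ℤ)⟧ ∈ perp C T.P := fun F hF f => by
  apply (shiftFunctor C (1 : ℤ)).map_injective
  rw [Functor.map_zero, ← cancel_mono (shiftNegShift X (1 : ℤ)).hom, zero_comp]
  exact hX _ (T.shift_mem F hF) _

/-- The t-structure in the sense of Mathlib with aisle `T.P`. Its truncation functors produce the
heart filtrations. -/
def toTStructure (T : TStr C) : TStructure C where
  le n X := X⟦n⟧ ∈ T.P
  ge n X := X⟦n - 1⟧ ∈ perp C T.P
  le_isClosedUnderIsomorphisms n :=
    ⟨fun e hX => T.mem_P_of_iso ((shiftFunctor C n).mapIso e) hX⟩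
  ge_isClosedUnderIsomorphisms n :=
    ⟨fun e hX => T.mem_perp_of_iso ((shiftFunctor C (n - 1)).mapIso e) hX⟩
  le_shift n a n' h X hX := T.mem_P_of_iso ((shiftFunctorAdd' C a n' n h).app X) hX
  ge_shift n a n' h X hX :=
    T.mem_perp_of_iso ((shiftFunctorAdd' C a (n' - 1) (n - 1) (by lia)).app X) hX
  zero' X Y f hX hY :=
    T.mem_perp_of_iso ((shiftFunctorZero' C (1 - 1 : ℤ) (by simp)).app Y) hY X
      (T.mem_P_of_iso ((shiftFunctorZero C ℤ).app X) hX) f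
  le_zero_le X hX := T.shift_mem X (T.mem_P_of_iso ((shiftFunctorZero C ℤ).app X) hX)
  ge_one_le X hX := T.shift_neg_one_mem_perp
    (T.mem_perp_of_iso ((shiftFunctorZero' C (1 - 1 : ℤ) (by simp)).app X) hX)
  exists_triangle_zero_one A := by
    obtain ⟨F, G, f, g, h, hF, hG, hT⟩ := T.exists_triangle A
    exact ⟨F, G, T.mem_P_of_iso ((shiftFunctorZero C ℤ).symm.app F) hF,
      T.mem_perp_of_iso ((shiftFunctorZero' C (1 - 1 : ℤ) (by simp)).symm.app G) hG,
      f, g, h, hT⟩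

lemma le_zero_iff (T : TStr C) (X : C) : T.toTStructure.le 0 X ↔ X ∈ T.P :=
  ⟨T.mem_P_of_iso ((shiftFunctorZero C ℤ).app X),
    T.mem_P_of_iso ((shiftFunctorZero C ℤ).symm.app X)⟩

lemma mem_heart_iff (T : TStr C) (X : C) : X ∈ heart C T ↔ T.toTStructure.heart X :=
  and_congr_left fun _ => (T.le_zero_iff X).symm

lemma le_zero_shift (T : TStr C) {X : C} (hX : X ∈ T.P) {d : ℤ} (hd : 0 ≤ d) :
    T.toTStructure.le 0 (X⟦d⟧) :=
  T.toTStructure.le_shift d d 0 (add_zero d) X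
    (T.toTStructure.le_monotone hd X ((T.le_zero_iff X).2 hX))

end TStr

namespace HeartFiltration

variable {T : TStr C} {X : C}

/-- The empty filtration of a zero object, the base case for building heart filtrations. -/
noncomputable def ofIsZero (T : TStr C) (hX : IsZero X) : HeartFiltration C T X where
  n := 0
  obj _ := X
  deg _ := 0
  factor _ := X
  zero := hX
  top := Iso.refl X
  mem i _ _ := by lia
  strict i j _ _ _ := by lia
  tri i _ _ := by lia

/-- The filtration of an object of the heart with itself as only factor, in degree `0`: it reads
off the homology of an object of the heart. -/
noncomputable def single (hX : X ∈ heart C T) : HeartFiltration C T X where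
  n := 1
  obj i := if i = 0 then 0 else X
  deg _ := 0
  factor _ := X
  zero := isZero_zero C
  top := Iso.refl X
  mem _ _ _ := hX
  strict i j _ _ _ := by lia
  tri i _ _ := by
    obtain rfl : i = 1 := by lia
    exact exists_distTriang_of_iso (contractible_distinguished₁ X)
      (Iso.refl _) (Iso.refl _) ((shiftFunctorZero C ℤ).symm.app X)

/-- The extension of a filtration of `A` by one further factor `B`, of degree `d` smaller than all
the previous ones, to a filtration of the middle term of a triangle `A ⟶ X ⟶ B⟦d⟧ ⟶ A⟦1⟧`. -/
noncomputable def append {A B : C} (F : HeartFiltration C T A) (d : ℤ)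
    (hd : ∀ i, 1 ≤ i → i ≤ F.n → d < F.deg i) (hB : B ∈ heart C T)
    {f : A ⟶ X} {g : X ⟶ B⟦d⟧} {h : B⟦d⟧ ⟶ A⟦(1 : ℤ)⟧}
    (hT : Triangle.mk f g h ∈ distTriang C) : HeartFiltration C T X where
  n := F.n + 1
  obj i := if i ≤ F.n then F.obj i else X
  deg i := if i ≤ F.n then F.deg i else d
  factor i := if i ≤ F.n then F.factor i else B
  zero := F.zero
  top := eqToIso (if_neg (by lia))
  mem i hi _ := by
    split_ifs with h
    · exact F.mem i hi h
    · exact hB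
  strict i j hi hij hj := by
    have hi' : i ≤ F.n := by lia
    simp only [hi', if_true]
    split_ifs with h
    · exact F.strict i j hi hij h
    · exact hd i hi hi'
  tri i hi _ := by
    by_cases h : i ≤ F.n
    · obtain ⟨f, g, h₃, hT⟩ := F.tri i hi h
      exact exists_distTriang_of_iso hT (eqToIso (if_pos (by lia)).symm)
        (eqToIso (if_pos h).symm) (eqToIso (by simp [h]))
    · obtain rfl : i = F.n + 1 := by lia
      exact exists_distTriang_of_iso hT (F.top.symm ≪≫ eqToIso (if_pos (by lia)).symm)
        (eqToIso (if_neg h).symm) (eqToIso (by simp))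

lemma prop_of_forall_factor (Q : ObjectProperty C) [Q.ContainsZero]
    [Q.IsClosedUnderIsomorphisms] [Q.IsTriangulatedClosed₂] (F : HeartFiltration C T X)
    (hF : ∀ i, 1 ≤ i → i ≤ F.n → Q ((F.factor i)⟦F.deg i⟧)) : Q X := by
  have hobj : ∀ i ≤ F.n, Q (F.obj i) := by
    intro i hi
    induction i with
    | zero => exact Q.prop_of_isZero F.zero
    | succ i ih =>
      obtain ⟨f, g, h, hT⟩ := F.tri (i + 1) (by lia) hi
      exact Q.ext_of_isTriangulatedClosed₂ _ hT (ih (by lia)) (hF _ (by lia) hi)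
  exact Q.prop_of_iso F.top (hobj F.n le_rfl)

end HeartFiltration

namespace TStr

lemma exists_distTriang_heart (T : TStr C) (X : C) (m n : ℤ) (hmn : m ≤ n + 1)
    [T.toTStructure.IsLE X n] [T.toTStructure.IsGE X m] :
    ∃ (A B : C) (f : A ⟶ X) (g : X ⟶ B⟦-n⟧) (h : B⟦-n⟧ ⟶ A⟦(1 : ℤ)⟧),
      T.toTStructure.IsLE A (n - 1) ∧ T.toTStructure.IsGE A m ∧ B ∈ heart C T ∧
        Triangle.mk f g h ∈ distTriang C := by
  let t := T.toTStructure
  let A := (t.truncLT n).obj X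
  let B := (t.truncGE n).obj X
  have hT := t.triangleLTGE_distinguished n X
  have hB : t.IsLE B n :=
    have := t.isLE_shift A (n - 1) 1 (n - 2)
    t.isLE₂ _ (rot_of_distTriang _ hT) n ‹_› (t.isLE_of_le (A⟦(1 : ℤ)⟧) (n - 2) n)
  have hA : t.IsGE A m :=
    have := t.isGE_shift B n (-1) (n + 1)
    t.isGE₂ _ (inv_rot_of_distTriang _ hT) m (t.isGE_of_ge (B⟦(-1 : ℤ)⟧) m (n + 1)) ‹_›
  have hBn : B⟦n⟧ ∈ heart C T := (T.mem_heart_iff _).2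
    ((t.mem_heart_iff _).2 ⟨t.isLE_shift B n n 0, t.isGE_shift B n n 0⟩)
  obtain ⟨f, g, h, hT'⟩ :=
    exists_distTriang_of_iso hT (Iso.refl A) (Iso.refl X) (shiftShiftNeg B n).symm
  exact ⟨A, B⟦n⟧, f, g, h, inferInstance, hA, hBn, hT'⟩

lemma exists_heartFiltration_of_isLE_of_isGE (T : TStr C) (N : ℕ) (X : C) (n : ℤ)
    [T.toTStructure.IsLE X n] [T.toTStructure.IsGE X (n + 1 - N)] :
    ∃ F : HeartFiltration C T X, ∀ i, 1 ≤ i → i ≤ F.n → -n ≤ F.deg i := by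
  induction N generalizing X n with
  | zero =>
    have hX : IsZero X := T.toTStructure.isZero X n (n + 1 - (0 : ℕ))
    exact ⟨.ofIsZero T hX, fun i hi hi' => absurd (hi.trans hi') (Nat.not_succ_le_zero 0)⟩
  | succ N ih =>
    obtain ⟨A, B, f, g, h, hA, hA', hB, hT⟩ :=
      T.exists_distTriang_heart X (n + 1 - (N + 1 : ℕ)) n (by lia)
    have : T.toTStructure.IsGE A (n - 1 + 1 - N) :=
      T.toTStructure.isGE_of_ge A _ (n + 1 - (N + 1 : ℕ))
    obtain ⟨F, hF⟩ := ih A (n - 1)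
    have hdeg : ∀ i, 1 ≤ i → i ≤ F.n → -n < F.deg i := fun i hi hi' => by
      have := hF i hi hi'
      lia
    refine ⟨F.append (-n) hdeg hB hT, fun i hi _ => ?_⟩
    simp only [HeartFiltration.append]
    split_ifs with h
    · exact (hdeg i hi h).le
    · exact le_rfl

lemma exists_heartFiltration_of_isLE (T : TStr C) (X : C) (n : ℤ) [T.toTStructure.IsLE X n] :
    ∃ F : HeartFiltration C T X, ∀ i, 1 ≤ i → i ≤ F.n → -n ≤ F.deg i := by
  obtain ⟨b, hb⟩ := T.bounded_below X
  have : T.toTStructure.IsGE X (b + 1) := ⟨hb _ (by lia)⟩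
  have : T.toTStructure.IsGE X (n + 1 - (n - b).toNat) :=
    T.toTStructure.isGE_of_ge X _ (b + 1)
  exact T.exists_heartFiltration_of_isLE_of_isGE (n - b).toNat X n

lemma nonempty_heartFiltration (T : TStr C) (X : C) : Nonempty (HeartFiltration C T X) := by
  obtain ⟨a, ha⟩ := T.bounded_above X
  have : T.toTStructure.IsLE X a := ⟨ha a le_rfl⟩
  obtain ⟨F, -⟩ := T.exists_heartFiltration_of_isLE X a
  exact ⟨F⟩

lemma P_subset_iff_heart_subset {T U : TStr C} : U.P ⊆ T.P ↔ heart C U ⊆ T.P := by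
  refine ⟨fun h X hX => h hX.1, fun h X hX => ?_⟩
  have : U.toTStructure.IsLE X 0 := ⟨(U.le_zero_iff X).2 hX⟩
  obtain ⟨F, hF⟩ := U.exists_heartFiltration_of_isLE X 0
  exact (T.le_zero_iff X).1 <| F.prop_of_forall_factor _ fun i hi hi' =>
    T.le_zero_shift (h (F.mem i hi hi')) (by simpa using hF i hi hi')

lemma heart_eq_iff {T U : TStr C} : heart C T = heart C U ↔ T.P = U.P := by
  refine ⟨fun h => Set.Subset.antisymm ?_ ?_, fun h => by rw [heart, heart, h]⟩
  · exact P_subset_iff_heart_subset.2 (h.le.trans fun _ hX => hX.1)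
  · exact P_subset_iff_heart_subset.2 (h.ge.trans fun _ hX => hX.1)

end TStr

lemma tiltSharpSet_subset_P (T : TStr C) (free tor : Set C) :
    tiltSharpSet C T free tor ⊆ T.P := by
  intro X hX
  obtain ⟨F⟩ := T.nonempty_heartFiltration X
  refine (T.le_zero_iff X).1 (F.prop_of_forall_factor _ fun i hi hi' => ?_)
  rcases hX F i hi hi' with hzero | ⟨hdeg, -⟩ | ⟨hdeg, -⟩
  · exact (T.toTStructure.le 0).prop_of_isZero ((shiftFunctor C (F.deg i)).map_isZero hzero)
  all_goals exact T.le_zero_shift (F.mem i hi hi').1 (by lia)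

lemma isZero_or_mem_tor_of_mem_tiltSharpSet {T : TStr C} {free tor : Set C} {X : C}
    (hX : X ∈ heart C T) (h : X ∈ tiltSharpSet C T free tor) : IsZero X ∨ X ∈ tor := by
  rcases h (.single hX) 1 le_rfl le_rfl with hzero | ⟨hdeg, -⟩ | ⟨-, htor⟩
  · exact .inl hzero
  · exact absurd hdeg zero_ne_one
  · exact .inr htor

lemma antitoneOn_P_of_heart_eq_tiltSharpSet {r : ℕ} {T : ℕ → TStr C} {free tor : ℕ → Set C}
    (hstep : ∀ t < r, heart C (T (t + 1)) = tiltSharpSet C (T t) (free t) (tor t)) :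
    AntitoneOn (fun t => (T t).P) (Set.Iic r) :=
  antitoneOn_of_succ_le Set.ordConnected_Iic fun t _ _ ht =>
    TStr.P_subset_iff_heart_subset.2
      ((hstep t (Nat.lt_of_succ_le ht)).le.trans (tiltSharpSet_subset_P _ _ _))

theorem statement_9_general {r : ℕ} {T : ℕ → TStr C} {free tor : ℕ → Set C}
    (hstep : ∀ t < r, heart C (T (t + 1)) = tiltSharpSet C (T t) (free t) (tor t))
    (hproper : ∃ t < r, ∃ X ∈ heart C (T t), ¬ IsZero X ∧ X ∉ tor t) :
    (T r).P ⊆ (T 0).P ∧ heart C (T 0) ≠ heart C (T r) := by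
  have hanti := antitoneOn_P_of_heart_eq_tiltSharpSet hstep
  refine ⟨hanti (Nat.zero_le r) Set.self_mem_Iic (Nat.zero_le r), fun hcycle => ?_⟩
  obtain ⟨t, ht, X, hX, hXzero, hXtor⟩ := hproper
  have hP : (T t).P ⊆ (T (t + 1)).P := calc
    (T t).P ⊆ (T 0).P := hanti (Nat.zero_le r) ht.le (Nat.zero_le t)
    _ = (T r).P := TStr.heart_eq_iff.1 hcycle
    _ ⊆ (T (t + 1)).P := hanti ht Set.self_mem_Iic ht
  have hheart : heart C (T t) = heart C (T (t + 1)) :=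
    TStr.heart_eq_iff.2 (hP.antisymm (hanti ht.le ht t.le_succ))
  have hXtilt : X ∈ tiltSharpSet C (T t) (free t) (tor t) := hstep t ht ▸ hheart ▸ hX
  exact (isZero_or_mem_tor_of_mem_tiltSharpSet hX hXtilt).elim hXzero hXtor

lemma IsSimpleIn.not_forall_hom_eq_zero {H : Set C} {S : C} (hS : IsSimpleIn C H S) :
    ¬ ∀ f : S ⟶ S, f = 0 :=
  fun h => hS.2.1 ((IsZero.iff_id_eq_zero S).2 (h (𝟙 S)))

end Tilting

/-- If `H_0, …, H_r` (`r ≥ 1`) are hearts with `H_0` finite and each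
`H_{t+1}` the simple forward tilt of `H_t` at a rigid simple `S_t`, then `H_0 < H_r`;
in particular `H_r ≠ H_0`, so the exchange graph contains no oriented cycle. -/
theorem statement_9 (k : Type*) [Field k] [IsAlgClosed k] [Linear k C]
    [∀ X Y : C, FiniteDimensional k (X ⟶ Y)] [HasFiniteBiproducts C]
    (r : ℕ) (hr : 1 ≤ r) (T : ℕ → TStr C) (S : ℕ → C)
    (hfin : FiniteHeart C (T 0))
    (hstep : ∀ t < r, IsSimpleIn C (heart C (T t)) (S t) ∧
      (∀ f : S t ⟶ (S t)⟦(1 : ℤ)⟧, f = 0) ∧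
      heart C (T (t + 1)) = simpleSharpSet C (T t) (S t)) :
    (T r).P ⊆ (T 0).P ∧ heart C (T 0) ≠ heart C (T r) :=
  statement_9_general (fun t ht => (hstep t ht).2.2)
    ⟨0, hr, S 0, (hstep 0 hr).1.1, (hstep 0 hr).1.2.1,
      fun hS => (hstep 0 hr).1.not_forall_hom_eq_zero hS.2⟩

end Paper
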